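/- Let ρ be a weak ψ-Gibbs measure with respect to a C¹-IFS (possibly with overlaps). For every 0 < q < 1 there exists a sequence (s_n) of positive reals with log s_n = o(n) such that for every n, m ∈ ℕ and every dyadic interval Q̃ ∈ D_n: Σ_{B∈D_n, B∼Q̃} Σ_{Q∈D_{m+n}, Q⊆B} ρ(Q)^q ≥ s_n ρ(Q̃)^q min_{u∈W_n} Σ_{Q∈D_{m+n}} ρ(T_u^{−1}(Q))^q, where B ∼ Q̃ means the closures of B and Q̃ intersect. -/

import Mathlib

open MeasureTheory Set Filter Topology
open scoped ENNReal NNReal Classical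

noncomputable section

namespace Symb

/-- Finite words over the alphabet `{1,…,N}`. -/
abbrev Word (N : ℕ) := List (Fin N)

/-- The sequence space `I^ℕ`. -/
abbrev SeqSp (N : ℕ) := ℕ → Fin N

variable {N : ℕ}

/-- The shift map on `I^ℕ`. -/
def shift (x : SeqSp N) : SeqSp N := fun k => x (k + 1)

/-- The cylinder set `[w]` of a finite word `w`. -/
def cylinder (w : Word N) : Set (SeqSp N) := {x | ∀ i : Fin w.length, x i = w.get i}

/-- Concatenation `w x` of a finite word with an infinite sequence. -/
def cat (w : Word N) (x : SeqSp N) : SeqSp N := fun k =>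
  if h : k < w.length then w.get ⟨k, h⟩ else x (k - w.length)

/-- Birkhoff sum `S_m f(x) = Σ_{k<m} f(σ^k x)`. -/
def birkhoff (f : SeqSp N → ℝ) (m : ℕ) (x : SeqSp N) : ℝ :=
  ∑ k ∈ Finset.range m, f (shift^[k] x)

/-- `S_w f = sup_{x ∈ [w]} S_{|w|} f(x)`. -/
def supBirkhoff (f : SeqSp N → ℝ) (w : Word N) : ℝ :=
  sSup (birkhoff f w.length '' cylinder w)

/-- `s_w f = inf_{x ∈ [w]} S_{|w|} f(x)`. -/
def infBirkhoff (f : SeqSp N → ℝ) (w : Word N) : ℝ :=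
  sInf (birkhoff f w.length '' cylinder w)

/-- `Σ_{w ∈ Iᵐ} exp (S_w f)`. -/
def partSum (f : SeqSp N → ℝ) (m : ℕ) : ℝ :=
  ∑ v : Fin m → Fin N, Real.exp (supBirkhoff f (List.ofFn v))

/-- The topological pressure `P(f) = lim_m (1/m) log Σ_{w ∈ Iᵐ} exp(S_w f)`
(defined via `limsup`; for continuous `f` the limit exists). -/
def pressure (f : SeqSp N → ℝ) : ℝ :=
  Filter.limsup (fun m => Real.log (partSum f m) / m) Filter.atTop

/-- `var_k(f)`, the `k`-th variation of `f`. -/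
def varn (f : SeqSp N → ℝ) (k : ℕ) : ℝ :=
  sSup {d | ∃ x y : SeqSp N, (∀ i < k, x i = y i) ∧ d = |f x - f y|}

/-- The Perron–Frobenius (transfer) operator `L_ψ f(x) = Σ_{σ y = x} e^{ψ(y)} f(y)`. -/
def transfer (ψ f : SeqSp N → ℝ) (x : SeqSp N) : ℝ :=
  ∑ j : Fin N, Real.exp (ψ (cat [j] x)) * f (cat [j] x)

/-- `L_ψ 1 = 1`. -/
def Normalized (ψ : SeqSp N → ℝ) : Prop :=
  ∀ x, ∑ j : Fin N, Real.exp (ψ (cat [j] x)) = 1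

/-- `ν` is a fixed point of the dual transfer operator: `∫ L_ψ f dν = ∫ f dν`
for all continuous `f`. -/
def IsTransferFixed (ψ : SeqSp N → ℝ) (ν : MeasureTheory.Measure (SeqSp N)) : Prop :=
  ∀ f : SeqSp N → ℝ, Continuous f → ∫ x, transfer ψ f x ∂ν = ∫ x, f x ∂ν

/-- `ψ` is Hölder continuous on `I^ℕ`: `var_k(ψ) ≤ C αᵏ` for some `α ∈ (0,1)`. -/
def HolderPotential (ψ : SeqSp N → ℝ) : Prop :=
  ∃ α ∈ Set.Ioo (0:ℝ) 1, ∃ C : ℝ, ∀ k : ℕ, varn ψ k ≤ C * α ^ k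

end Symb

namespace Symb

/-- A `C¹` iterated function system on `[0,1]`. -/
structure C1IFS (N : ℕ) where
  T : Fin N → ℝ → ℝ
  T' : Fin N → ℝ → ℝ
  maps_into : ∀ i, Set.MapsTo (T i) (Set.Icc 0 1) (Set.Icc 0 1)
  hderiv : ∀ i, ∀ x ∈ Set.Icc (0:ℝ) 1, HasDerivWithinAt (T i) (T' i x) (Set.Icc 0 1) x
  cont_deriv : ∀ i, ContinuousOn (T' i) (Set.Icc 0 1)
  contracting : ∀ i, ∃ r < (1:ℝ), ∀ x ∈ Set.Icc (0:ℝ) 1, |T' i x| ≤ r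
  deriv_bdd_below : ∀ i, ∃ c > (0:ℝ), ∀ x ∈ Set.Icc (0:ℝ) 1, c ≤ |T' i x|

variable {N : ℕ}

/-- The IFS is non-trivial: at least two maps and no common fixed point. -/
def C1IFS.NontrivialIFS (Φ : C1IFS N) : Prop :=
  2 ≤ N ∧ ¬ ∃ x ∈ Set.Icc (0:ℝ) 1, ∀ i, Φ.T i x = x

/-- The IFS is `C^{1+γ}`: every `T_i'` is `γ`-Hölder for some `γ ∈ (0,1)`. -/
def C1IFS.IsC1gamma (Φ : C1IFS N) : Prop :=
  ∃ γ ∈ Set.Ioo (0:ℝ) 1, ∃ C : ℝ, ∀ i, ∀ x ∈ Set.Icc (0:ℝ) 1, ∀ y ∈ Set.Icc (0:ℝ) 1,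
    |Φ.T' i x - Φ.T' i y| ≤ C * |x - y| ^ γ

/-- `T_w = T_{w₁} ∘ ⋯ ∘ T_{w_k}`. -/
def wordMap (Φ : C1IFS N) : Word N → ℝ → ℝ
  | [] => id
  | i :: w => Φ.T i ∘ wordMap Φ w

/-- `T_w'`, the derivative of `T_w` (by the chain rule). -/
def wordDeriv (Φ : C1IFS N) : Word N → ℝ → ℝ
  | [] => fun _ => 1
  | i :: w => fun x => Φ.T' i (wordMap Φ w x) * wordDeriv Φ w x

/-- `π` is the natural coding map of the IFS:  `π(x) ∈ T_{x|m}([0,1])` for all `m`. -/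
def IsCoding (Φ : C1IFS N) (π : SeqSp N → ℝ) : Prop :=
  ∀ x : SeqSp N, ∀ m : ℕ, π x ∈ wordMap Φ (List.ofFn fun i : Fin m => x i) '' Set.Icc 0 1

/-- The geometric potential `φ(ω) = log |T'_{ω₁}(π(σω))|`. -/
def geomPot (Φ : C1IFS N) (π : SeqSp N → ℝ) (x : SeqSp N) : ℝ :=
  Real.log |Φ.T' (x 0) (π (shift x))|

/-- The open set condition with feasible open set `(0,1)`. -/
def OSC (Φ : C1IFS N) : Prop :=
  ∀ i j, i ≠ j → Disjoint (Φ.T i '' Set.Ioo 0 1) (Φ.T j '' Set.Ioo 0 1)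

/-- Left endpoint of the interval `I_w = T_w([0,1])`. -/
def aW (Φ : C1IFS N) (w : Word N) : ℝ := sInf (wordMap Φ w '' Set.Icc 0 1)

/-- Right endpoint of the interval `I_w = T_w([0,1])`. -/
def bW (Φ : C1IFS N) (w : Word N) : ℝ := sSup (wordMap Φ w '' Set.Icc 0 1)

/-- `(b_m)` is a weak bounded distortion sequence for `Φ`: non-negative, `o(m)`, and
`e^{-b_{|w|}} ≤ T_w'(x)/T_w'(y) ≤ e^{b_{|w|}}` for all words `w` and `x,y ∈ [0,1]`. -/
def IsWBDPseq (Φ : C1IFS N) (b : ℕ → ℝ) : Prop :=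
  (∀ m, 0 ≤ b m) ∧ Filter.Tendsto (fun m => b m / m) Filter.atTop (nhds 0) ∧
  ∀ w : Word N, ∀ x ∈ Set.Icc (0:ℝ) 1, ∀ y ∈ Set.Icc (0:ℝ) 1,
    Real.exp (-(b w.length)) ≤ wordDeriv Φ w x / wordDeriv Φ w y ∧
    wordDeriv Φ w x / wordDeriv Φ w y ≤ Real.exp (b w.length)

end Symb
namespace Lq

open MeasureTheory

/-- The dyadic interval `((k-1)2^{-n}, k 2^{-n}]`. -/
def dyadic (n : ℕ) (k : ℤ) : Set ℝ := Set.Ioc (((k : ℝ) - 1) / 2 ^ n) ((k : ℝ) / 2 ^ n)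

/-- `Σ_{C ∈ D_n} ρ(C)^q`, the sum over dyadic intervals of positive measure. -/
def lqSum (ρ : Measure ℝ) (n : ℕ) (q : ℝ) : ℝ :=
  ∑' k : ℤ, if ρ (dyadic n k) = 0 then 0 else (ρ (dyadic n k)).toReal ^ q

/-- `β_n^ρ(q) = (1/(n log 2)) log Σ_{C ∈ D_n} ρ(C)^q`. -/
def betaN (ρ : Measure ℝ) (n : ℕ) (q : ℝ) : ℝ :=
  Real.log (lqSum ρ n q) / (n * Real.log 2)

/-- The `L^q`-spectrum `β_ρ(q) = limsup_n β_n^ρ(q)`. -/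
def beta (ρ : Measure ℝ) (q : ℝ) : ℝ :=
  Filter.limsup (fun n => betaN ρ n q) Filter.atTop

end Lq
open Symb

/-- The self-conformal set `K = π(I^ℕ)`. -/
def attractor {N : ℕ} (Φ : C1IFS N) (π : SeqSp N → ℝ) : Set ℝ := π '' Set.univ

/-- `K_u = T_u(K)`. -/
def Ku {N : ℕ} (Φ : C1IFS N) (π : SeqSp N → ℝ) (u : Word N) : Set ℝ :=
  wordMap Φ u '' attractor Φ π

/-- `W_n = {u ∈ I^* : diam(K_u) ≤ 2^{−n} < diam(K_{u⁻})}`. -/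
def Wn {N : ℕ} (Φ : C1IFS N) (π : SeqSp N → ℝ) (n : ℕ) : Set (Word N) :=
  {u | u ≠ [] ∧ Metric.diam (Ku Φ π u) ≤ 1 / 2 ^ n ∧
    1 / 2 ^ n < Metric.diam (Ku Φ π u.dropLast)}

/-- `Σ_{Q ∈ D_m} ρ(T_u⁻¹(Q))^q`. -/
def pullbackLqSum {N : ℕ} (Φ : C1IFS N) (ρ : Measure ℝ) (u : Word N) (m : ℕ) (q : ℝ) : ℝ :=
  ∑' k : ℤ, if ρ (Lq.dyadic m k) = 0 then 0
    else (ρ (wordMap Φ u ⁻¹' Lq.dyadic m k)).toReal ^ q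

/-!
By `L_ψ* ν = ν`, the measure `ν` on a cylinder `[u]` is the copy of `ν` under `x ↦ u x` with
density `exp (S_{|u|} ψ (u x))`, and on `[u]` this density varies by at most a factor
`exp (∑_{k ≤ |u|} var_k ψ)`. The cylinders of the words in `W_n` partition `I^ℕ`, and these words
have length `O(n)`, so `ρ(Q) ≥ e^{-o(n)} ∑_u ν[u] ρ(T_u⁻¹ Q)` for every Borel set `Q`, where `u`
ranges over the words of `W_n` whose piece `K_u` meets `Q̃`. The weights `ν[u]` of these words add
up to at least `ρ(Q̃)`, so Jensen's inequality for the concave function `t ↦ t^q`, summed over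
`Q`, bounds `∑_Q ρ(Q)^q` below by `e^{-o(n)} ρ(Q̃)^q` times a weighted average of the sums
`∑_Q ρ(T_u⁻¹ Q)^q`. Since `diam K_u ≤ 2⁻ⁿ`, only the `Q` inside neighbours of `Q̃` contribute.
-/

namespace Symb

variable {N : ℕ}

section Sequences

lemma cat_nil (x : SeqSp N) : cat [] x = x := by
  funext k
  simp [cat]

lemma cat_cons (j : Fin N) (w : Word N) (x : SeqSp N) : cat (j :: w) x = cat [j] (cat w x) := by
  funext k
  cases k <;> simp [cat]

lemma shift_cat_cons (j : Fin N) (w : Word N) (x : SeqSp N) :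
    shift (cat (j :: w) x) = cat w x := by
  funext k
  simp [shift, cat]

lemma continuous_cat (w : Word N) : Continuous (cat w) := by
  refine continuous_pi fun k => ?_
  by_cases hk : k < w.length
  · simpa only [cat, hk, dif_pos] using continuous_const
  · simpa only [cat, hk, dif_neg, not_false_eq_true] using continuous_apply _

/-- The prefix `x|_m` of length `m` of the sequence `x`. -/
def take (m : ℕ) (x : SeqSp N) : Word N := List.ofFn fun i : Fin m => x i

lemma take_zero (x : SeqSp N) : take 0 x = [] := rfl

@[simp]
lemma length_take (m : ℕ) (x : SeqSp N) : (take m x).length = m := List.length_ofFn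

lemma take_succ_cat_singleton (m : ℕ) (j : Fin N) (x : SeqSp N) :
    take (m + 1) (cat [j] x) = j :: take m x := by
  simp [take, List.ofFn_succ, cat]

lemma list_take_take (m n : ℕ) (x : SeqSp N) : (take n x).take m = take (min m n) x :=
  List.ext_getElem (by simp) fun i _ _ => by simp [take]

lemma take_isPrefix_take {m n : ℕ} (hmn : m ≤ n) (x : SeqSp N) : take m x <+: take n x := by
  simpa only [list_take_take, min_eq_left hmn] using List.take_prefix m (take n x)

lemma dropLast_take_succ (m : ℕ) (x : SeqSp N) : (take (m + 1) x).dropLast = take m x := by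
  rw [List.dropLast_eq_take, length_take, list_take_take]
  simp

lemma take_congr {m : ℕ} {x y : SeqSp N} (h : ∀ i < m, x i = y i) : take m x = take m y :=
  congrArg List.ofFn (funext fun i => h i i.2)

lemma mem_cylinder_iff_take_eq {w : Word N} {x : SeqSp N} :
    x ∈ cylinder w ↔ take w.length x = w := by
  constructor
  · exact fun h => List.ext_get (by simp) fun i _ hi => by simpa [take] using h ⟨i, hi⟩
  · intro h i
    simpa [take] using List.getElem_of_eq h (i := i) (by simp)

lemma mem_cylinder_take (m : ℕ) (x : SeqSp N) : x ∈ cylinder (take m x) := by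
  rw [mem_cylinder_iff_take_eq, length_take]

lemma mem_cylinder_nil (x : SeqSp N) : x ∈ cylinder ([] : Word N) := fun i => i.elim0

lemma exists_cat_eq_of_mem_cylinder {w : Word N} {x : SeqSp N} (hx : x ∈ cylinder w) :
    ∃ y, cat w y = x := by
  refine ⟨fun k => x (k + w.length), funext fun k => ?_⟩
  by_cases hk : k < w.length
  · simpa only [cat, hk, dif_pos] using (hx ⟨k, hk⟩).symm
  · simp only [cat, hk, dif_neg, not_false_eq_true, Nat.sub_add_cancel (not_lt.1 hk)]

lemma cat_singleton_mem_cylinder_cons {i j : Fin N} {w : Word N} {x : SeqSp N} :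
    cat [i] x ∈ cylinder (j :: w) ↔ i = j ∧ x ∈ cylinder w := by
  rw [mem_cylinder_iff_take_eq, mem_cylinder_iff_take_eq, List.length_cons,
    take_succ_cat_singleton, List.cons.injEq]

lemma measurableSet_cylinder (w : Word N) : MeasurableSet (cylinder w) := by
  simp only [cylinder, Set.ofPred_forall]
  exact MeasurableSet.iInter fun i =>
    measurableSet_eq_fun (measurable_pi_apply (i : ℕ)) measurable_const

end Sequences

section Contraction

lemma C1IFS.exists_lipschitzOnWith (Φ : C1IFS N) :
    ∃ r : ℝ≥0, r < 1 ∧ ∀ i, LipschitzOnWith r (Φ.T i) (Icc 0 1) := by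
  choose r hr_lt_one hr using Φ.contracting
  obtain ⟨⟨R, hR_lt_one⟩, hrR⟩ := Finite.exists_le fun i => (⟨r i, hr_lt_one i⟩ : Iio (1 : ℝ))
  refine ⟨R.toNNReal, Real.toNNReal_lt_one.2 hR_lt_one, fun i => ?_⟩
  refine (convex_Icc 0 1).lipschitzOnWith_of_nnnorm_hasDerivWithin_le (Φ.hderiv i) fun x hx => ?_
  exact NNReal.le_toNNReal_of_coe_le ((hr i x hx).trans (hrR i))

variable {Φ : C1IFS N}

lemma wordMap_append (u v : Word N) : wordMap Φ (u ++ v) = wordMap Φ u ∘ wordMap Φ v := by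
  induction u with
  | nil => rfl
  | cons j u ih => simp only [List.cons_append, wordMap, ih, Function.comp_assoc]

lemma mapsTo_wordMap (w : Word N) : MapsTo (wordMap Φ w) (Icc 0 1) (Icc 0 1) := by
  induction w with
  | nil => exact mapsTo_id _
  | cons j w ih => exact (Φ.maps_into j).comp ih

lemma lipschitzOnWith_wordMap {r : ℝ≥0} (hr : ∀ i, LipschitzOnWith r (Φ.T i) (Icc 0 1))
    (w : Word N) : LipschitzOnWith (r ^ w.length) (wordMap Φ w) (Icc 0 1) := by
  induction w with
  | nil => simpa [wordMap] using LipschitzWith.id.lipschitzOnWith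
  | cons j w ih => simpa [wordMap, pow_succ'] using (hr j).comp ih (mapsTo_wordMap w)

lemma continuousOn_wordMap (w : Word N) : ContinuousOn (wordMap Φ w) (Icc 0 1) := by
  obtain ⟨r, -, hr⟩ := Φ.exists_lipschitzOnWith
  exact (lipschitzOnWith_wordMap hr w).continuousOn

lemma isBounded_image_wordMap (w : Word N) :
    Bornology.IsBounded (wordMap Φ w '' Icc 0 1) :=
  (Metric.isBounded_Icc 0 1).subset (mapsTo_wordMap w).image_subset

variable (Φ) in
lemma exists_diam_image_wordMap_le :
    ∃ r : ℝ, 0 ≤ r ∧ r < 1 ∧ ∀ w, Metric.diam (wordMap Φ w '' Icc 0 1) ≤ r ^ w.length := by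
  obtain ⟨r, hr_lt_one, hr⟩ := Φ.exists_lipschitzOnWith
  refine ⟨r, r.2, hr_lt_one, fun w => Metric.diam_le_of_forall_dist_le (by positivity) ?_⟩
  rintro _ ⟨x, hx, rfl⟩ _ ⟨y, hy, rfl⟩
  calc dist (wordMap Φ w x) (wordMap Φ w y)
      ≤ (r ^ w.length : ℝ≥0) * dist x y := (lipschitzOnWith_wordMap hr w).dist_le_mul x hx y hy
    _ ≤ r ^ w.length := by
      rw [NNReal.coe_pow]
      exact mul_le_of_le_one_right (by positivity) (Real.dist_le_of_mem_Icc_01 hx hy)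

end Contraction

section Coding

variable {Φ : C1IFS N} {π : SeqSp N → ℝ}

lemma IsCoding.mem_Icc (hπ : IsCoding Φ π) (x : SeqSp N) : π x ∈ Icc (0 : ℝ) 1 := by
  simpa [wordMap] using hπ x 0

lemma IsCoding.eq_of_forall_mem_image (hπ : IsCoding Φ π) {x : SeqSp N} {z : ℝ}
    (hz : ∀ m, z ∈ wordMap Φ (take m x) '' Icc 0 1) : π x = z := by
  obtain ⟨r, hr_nonneg, hr_lt_one, hr⟩ := exists_diam_image_wordMap_le Φ
  have dist_le_pow (m : ℕ) : dist (π x) z ≤ r ^ m := by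
    simpa only [length_take] using
      (Metric.dist_le_diam_of_mem (isBounded_image_wordMap _) (hπ x m) (hz m)).trans
        (hr (take m x))
  exact dist_le_zero.1 <|
    ge_of_tendsto' (tendsto_pow_atTop_nhds_zero_of_lt_one hr_nonneg hr_lt_one) dist_le_pow

lemma IsCoding.apply_cat (hπ : IsCoding Φ π) (w : Word N) (x : SeqSp N) :
    π (cat w x) = wordMap Φ w (π x) := by
  induction w with
  | nil => simp [cat_nil, wordMap]
  | cons j w ih =>
    rw [cat_cons, wordMap, Function.comp_apply, ← ih]
    refine hπ.eq_of_forall_mem_image fun m => ?_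
    cases m with
    | zero => simpa [take_zero, wordMap] using Φ.maps_into j (hπ.mem_Icc _)
    | succ m =>
      rw [take_succ_cat_singleton, wordMap, image_comp]
      exact mem_image_of_mem _ (hπ _ m)

lemma IsCoding.continuous (hπ : IsCoding Φ π) : Continuous π := by
  obtain ⟨r, -, hr_lt_one, hr⟩ := exists_diam_image_wordMap_le Φ
  refine Metric.continuous_iff'.2 fun x ε hε => ?_
  obtain ⟨m, hm⟩ := exists_pow_lt_of_lt_one hε hr_lt_one
  filter_upwards [(PiNat.isOpen_cylinder _ x m).mem_nhds (PiNat.self_mem_cylinder x m)] with y hy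
  have hy_mem : π y ∈ wordMap Φ (take m x) '' Icc 0 1 := take_congr hy ▸ hπ y m
  calc dist (π y) (π x)
      ≤ Metric.diam (wordMap Φ (take m x) '' Icc 0 1) :=
        Metric.dist_le_diam_of_mem (isBounded_image_wordMap _) hy_mem (hπ x m)
    _ ≤ r ^ m := by simpa only [length_take] using hr (take m x)
    _ < ε := hm

lemma IsCoding.Ku_eq_range (hπ : IsCoding Φ π) (u : Word N) :
    Ku Φ π u = range fun x => π (cat u x) := by
  simp only [Ku, attractor, image_univ, ← range_comp, Function.comp_def, hπ.apply_cat]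

lemma IsCoding.Ku_subset_image (hπ : IsCoding Φ π) (u : Word N) :
    Ku Φ π u ⊆ wordMap Φ u '' Icc 0 1 :=
  image_mono <| image_subset_iff.2 fun x _ => hπ.mem_Icc x

lemma IsCoding.isBounded_Ku (hπ : IsCoding Φ π) (u : Word N) :
    Bornology.IsBounded (Ku Φ π u) :=
  (isBounded_image_wordMap u).subset (hπ.Ku_subset_image u)

lemma IsCoding.diam_Ku_anti (hπ : IsCoding Φ π) {u v : Word N} (huv : u <+: v) :
    Metric.diam (Ku Φ π v) ≤ Metric.diam (Ku Φ π u) := by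
  obtain ⟨w, rfl⟩ := huv
  refine Metric.diam_mono ?_ (hπ.isBounded_Ku u)
  rw [Ku, Ku, wordMap_append, image_comp]
  refine image_mono ?_
  rintro _ ⟨_, ⟨x, -, rfl⟩, rfl⟩
  exact ⟨cat w x, mem_univ _, hπ.apply_cat w x⟩

lemma IsCoding.exists_diam_Ku_le (hπ : IsCoding Φ π) :
    ∃ r : ℝ, 0 ≤ r ∧ r < 1 ∧ ∀ u, Metric.diam (Ku Φ π u) ≤ r ^ u.length := by
  obtain ⟨r, hr_nonneg, hr_lt_one, hr⟩ := exists_diam_image_wordMap_le Φ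
  exact ⟨r, hr_nonneg, hr_lt_one, fun u =>
    (Metric.diam_mono (hπ.Ku_subset_image u) (isBounded_image_wordMap u)).trans (hr u)⟩

end Coding

section StoppingWords

variable {Φ : C1IFS N} {π : SeqSp N → ℝ}

lemma IsCoding.exists_length_le_mul_of_mem_Wn (hπ : IsCoding Φ π) :
    ∃ L : ℕ, 0 < L ∧ ∀ n, ∀ u ∈ Wn Φ π n, u.length ≤ L * n := by
  obtain ⟨r, hr_nonneg, hr_lt_one, hr⟩ := hπ.exists_diam_Ku_le
  obtain ⟨L, hL⟩ := exists_pow_lt_of_lt_one (one_half_pos (α := ℝ)) hr_lt_one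
  have hL_pos : 0 < L := Nat.pos_of_ne_zero fun hL_zero => by norm_num [hL_zero] at hL
  refine ⟨L, hL_pos, fun n u hu => not_lt.1 fun hlt => hu.2.2.not_ge ?_⟩
  calc Metric.diam (Ku Φ π u.dropLast)
      ≤ r ^ (u.length - 1) := by simpa only [List.length_dropLast] using hr u.dropLast
    _ ≤ r ^ (L * n) := pow_le_pow_of_le_one hr_nonneg hr_lt_one.le (Nat.le_sub_one_of_lt hlt)
    _ = (r ^ L) ^ n := pow_mul r L n
    _ ≤ (1 / 2) ^ n := pow_le_pow_left₀ (by positivity) hL.le n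
    _ = 1 / 2 ^ n := one_div_pow 2 n

lemma IsCoding.finite_Wn (hπ : IsCoding Φ π) (n : ℕ) : (Wn Φ π n).Finite := by
  obtain ⟨L, -, hL⟩ := hπ.exists_length_le_mul_of_mem_Wn
  exact (List.finite_length_le (Fin N) (L * n)).subset fun u hu => hL n u hu

lemma IsCoding.exists_mem_Wn_mem_cylinder (hπ : IsCoding Φ π) {n : ℕ}
    (hW : (Wn Φ π n).Nonempty) (x : SeqSp N) : ∃ u ∈ Wn Φ π n, x ∈ cylinder u := by
  obtain ⟨r, -, hr_lt_one, hr⟩ := hπ.exists_diam_Ku_le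
  have exists_small : ∃ m, Metric.diam (Ku Φ π (take m x)) ≤ 1 / 2 ^ n := by
    obtain ⟨m, hm⟩ := exists_pow_lt_of_lt_one (show (0 : ℝ) < 1 / 2 ^ n by positivity) hr_lt_one
    exact ⟨m, (by simpa only [length_take] using hr (take m x) : _ ≤ r ^ m).trans hm.le⟩
  have attractor_large : 1 / 2 ^ n < Metric.diam (Ku Φ π (take 0 x)) := by
    obtain ⟨v, -, -, hv⟩ := hW
    exact hv.trans_le (hπ.diam_Ku_anti v.dropLast.nil_prefix)
  obtain ⟨m, hm⟩ : ∃ m, Nat.find exists_small = m + 1 :=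
    Nat.exists_eq_succ_of_ne_zero fun h =>
      attractor_large.not_ge ((Nat.find_eq_zero exists_small).1 h)
  obtain ⟨small_at_succ, large_before⟩ := (Nat.find_eq_iff exists_small).1 hm
  refine ⟨take (m + 1) x, ⟨?_, small_at_succ, ?_⟩, mem_cylinder_take _ _⟩
  · exact List.ne_nil_of_length_eq_add_one (length_take _ _)
  · rw [dropLast_take_succ]
    exact not_le.1 (large_before m m.lt_succ_self)

lemma IsCoding.length_le_of_mem_Wn_of_mem_cylinder (hπ : IsCoding Φ π) {n : ℕ} {u v : Word N}
    (hu : u ∈ Wn Φ π n) (hv : v ∈ Wn Φ π n) {x : SeqSp N} (hxu : x ∈ cylinder u)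
    (hxv : x ∈ cylinder v) : v.length ≤ u.length := by
  by_contra! hlt
  obtain ⟨l, hl⟩ := Nat.exists_eq_add_one_of_ne_zero (Nat.ne_zero_of_lt hlt)
  rw [mem_cylinder_iff_take_eq] at hxu hxv
  have hprefix : u <+: v.dropLast := by
    rw [← hxu, ← hxv, hl, dropLast_take_succ]
    exact take_isPrefix_take (by omega) x
  exact (hv.2.2.trans_le (hπ.diam_Ku_anti hprefix)).not_ge hu.2.1

lemma IsCoding.pairwiseDisjoint_cylinder_Wn (hπ : IsCoding Φ π) (n : ℕ) :
    (Wn Φ π n).PairwiseDisjoint cylinder := by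
  intro u hu v hv huv
  refine Set.disjoint_left.2 fun x hxu hxv => huv ?_
  have hlength := le_antisymm (hπ.length_le_of_mem_Wn_of_mem_cylinder hv hu hxv hxu)
    (hπ.length_le_of_mem_Wn_of_mem_cylinder hu hv hxu hxv)
  rw [mem_cylinder_iff_take_eq] at hxu hxv
  rw [← hxu, ← hxv, hlength]

end StoppingWords

variable {ψ : SeqSp N → ℝ}

section Variation

lemma exists_forall_abs_sub_lt_of_continuous (hψ : Continuous ψ) {ε : ℝ} (hε : 0 < ε) :
    ∃ k, ∀ x y : SeqSp N, (∀ i < k, x i = y i) → |ψ x - ψ y| < ε := by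
  let _ : MetricSpace (SeqSp N) := PiNat.metricSpace
  obtain ⟨δ, hδ, hψδ⟩ := Metric.uniformContinuous_iff.1
    (CompactSpace.uniformContinuous_of_continuous hψ) ε hε
  obtain ⟨k, hk⟩ := exists_pow_lt_of_lt_one hδ one_half_lt_one
  exact ⟨k, fun x y hxy => hψδ ((PiNat.mem_cylinder_iff_dist_le.1 hxy).trans_lt hk)⟩

lemma abs_sub_le_varn (hψ : Continuous ψ) {k : ℕ} {x y : SeqSp N} (hxy : ∀ i < k, x i = y i) :
    |ψ x - ψ y| ≤ varn ψ k := by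
  obtain ⟨C, hC⟩ := (isCompact_range hψ).isBounded.exists_norm_le
  refine le_csSup ⟨C + C, ?_⟩ ⟨x, y, hxy, rfl⟩
  rintro _ ⟨a, b, -, rfl⟩
  exact (abs_sub _ _).trans (add_le_add (hC _ ⟨a, rfl⟩) (hC _ ⟨b, rfl⟩))

lemma varn_nonneg (ψ : SeqSp N → ℝ) (k : ℕ) : 0 ≤ varn ψ k := by
  refine Real.sSup_nonneg ?_
  rintro _ ⟨a, b, -, rfl⟩
  exact abs_nonneg _

lemma tendsto_varn_zero (hψ : Continuous ψ) : Tendsto (varn ψ) atTop (𝓝 0) := by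
  refine Metric.tendsto_atTop.2 fun ε hε => ?_
  obtain ⟨k, hk⟩ := exists_forall_abs_sub_lt_of_continuous hψ (half_pos hε)
  refine ⟨k, fun n hn => ?_⟩
  have varn_le : varn ψ n ≤ ε / 2 := by
    refine Real.sSup_le ?_ (half_pos hε).le
    rintro _ ⟨a, b, hab, rfl⟩
    exact (hk a b fun i hi => hab i (hi.trans_le hn)).le
  rw [Real.dist_0_eq_abs, abs_of_nonneg (varn_nonneg ψ n)]
  exact varn_le.trans_lt (half_lt_self hε)

/-- `∑_{k=1}^n var_k(ψ)`, which controls the distortion of `S_n ψ` on cylinders of length `n`. -/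
def varnSum (ψ : SeqSp N → ℝ) (n : ℕ) : ℝ := ∑ k ∈ Finset.range n, varn ψ (k + 1)

lemma varnSum_succ (ψ : SeqSp N → ℝ) (n : ℕ) :
    varnSum ψ (n + 1) = varnSum ψ n + varn ψ (n + 1) :=
  Finset.sum_range_succ _ _

lemma monotone_varnSum (ψ : SeqSp N → ℝ) : Monotone (varnSum ψ) :=
  monotone_nat_of_le_succ fun n => by
    rw [varnSum_succ]
    exact le_add_of_nonneg_right (varn_nonneg ψ _)

lemma tendsto_varnSum_mul_div (hψ : Continuous ψ) {L : ℕ} (hL : 0 < L) :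
    Tendsto (fun n : ℕ => varnSum ψ (L * n) / n) atTop (𝓝 0) := by
  have average_tendsto : Tendsto (fun n : ℕ => (n : ℝ)⁻¹ * varnSum ψ n) atTop (𝓝 0) :=
    ((tendsto_varn_zero hψ).comp (tendsto_add_atTop_nat 1)).cesaro
  have hmul := (average_tendsto.comp (tendsto_id.const_mul_atTop' hL)).const_mul (L : ℝ)
  rw [mul_zero] at hmul
  refine hmul.congr fun n => ?_
  simp only [Function.comp_apply, id_eq]
  push_cast
  field_simp

lemma birkhoff_succ (ψ : SeqSp N → ℝ) (n : ℕ) (x : SeqSp N) :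
    birkhoff ψ (n + 1) x = ψ x + birkhoff ψ n (shift x) := by
  simp only [birkhoff, Finset.sum_range_succ', Function.iterate_succ_apply,
    Function.iterate_zero_apply, add_comm]

lemma birkhoff_le_add_varnSum (hψ : Continuous ψ) {n : ℕ} {x y : SeqSp N}
    (hxy : ∀ i < n, x i = y i) : birkhoff ψ n x ≤ birkhoff ψ n y + varnSum ψ n := by
  induction n generalizing x y with
  | zero => simp [birkhoff, varnSum]
  | succ n ih =>
    have h_head := (abs_le.1 (abs_sub_le_varn hψ hxy)).2
    have h_tail : birkhoff ψ n (shift x) ≤ birkhoff ψ n (shift y) + varnSum ψ n :=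
      ih fun i hi => hxy (i + 1) (by omega)
    rw [birkhoff_succ, birkhoff_succ, varnSum_succ]
    linarith

lemma birkhoff_cat_le_add_varnSum (hψ : Continuous ψ) (w : Word N) (x y : SeqSp N) :
    birkhoff ψ w.length (cat w x) ≤ birkhoff ψ w.length (cat w y) + varnSum ψ w.length :=
  birkhoff_le_add_varnSum hψ fun i hi => by simp [cat, hi]

end Variation

section GibbsMeasure

variable {ν : Measure (SeqSp N)}

lemma measurable_ofReal_exp_comp_cat (hψ : Continuous ψ) (w : Word N) :
    Measurable fun x => ENNReal.ofReal (Real.exp (ψ (cat w x))) :=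
  (hψ.comp (continuous_cat w)).rexp.measurable.ennreal_ofReal

lemma IsTransferFixed.eq_sum_map_withDensity [IsFiniteMeasure ν] (hψ : Continuous ψ)
    (hν : IsTransferFixed ψ ν) :
    ν = ∑ j : Fin N, (ν.withDensity fun x => ENNReal.ofReal (Real.exp (ψ (cat [j] x)))).map
      (cat [j]) := by
  have weight_continuous (j : Fin N) : Continuous fun x => Real.exp (ψ (cat [j] x)) :=
    (hψ.comp (continuous_cat [j])).rexp
  have integrable_of_continuous {g : SeqSp N → ℝ} (hg : Continuous g) : Integrable g ν :=
    hg.integrable_of_hasCompactSupport (.of_compactSpace g)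
  have (j : Fin N) : IsFiniteMeasure
      (ν.withDensity fun x => ENNReal.ofReal (Real.exp (ψ (cat [j] x)))) :=
    isFiniteMeasure_withDensity_ofReal (integrable_of_continuous (weight_continuous j)).2
  refine ext_of_forall_integral_eq_of_IsFiniteMeasure fun f => ?_
  have term_integrable (j : Fin N) :
      Integrable (fun x => Real.exp (ψ (cat [j] x)) * f (cat [j] x)) ν :=
    integrable_of_continuous ((weight_continuous j).mul (f.continuous.comp (continuous_cat [j])))
  rw [← hν f f.continuous, integral_finsetSum_measure fun j _ => f.integrable _]
  simp only [transfer]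
  rw [integral_finsetSum _ fun j _ => term_integrable j]
  refine Finset.sum_congr rfl fun j _ => ?_
  rw [integral_map (continuous_cat [j]).aemeasurable f.continuous.aestronglyMeasurable,
    integral_withDensity_eq_integral_toReal_smul (measurable_ofReal_exp_comp_cat hψ [j])
      (.of_forall fun _ => ENNReal.ofReal_lt_top)]
  simp only [smul_eq_mul, ENNReal.toReal_ofReal (Real.exp_pos _).le]

lemma IsTransferFixed.lintegral_eq_sum [IsFiniteMeasure ν] (hψ : Continuous ψ)
    (hν : IsTransferFixed ψ ν) {F : SeqSp N → ℝ≥0∞} (hF : Measurable F) :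
    ∫⁻ x, F x ∂ν =
      ∑ j : Fin N, ∫⁻ x, ENNReal.ofReal (Real.exp (ψ (cat [j] x))) * F (cat [j] x) ∂ν := by
  conv_lhs => rw [hν.eq_sum_map_withDensity hψ]
  rw [lintegral_finsetSum_measure]
  refine Finset.sum_congr rfl fun j _ => ?_
  have hcat : Measurable (cat [j]) := (continuous_cat [j]).measurable
  rw [lintegral_map hF hcat]
  exact lintegral_withDensity_eq_lintegral_mul _ (measurable_ofReal_exp_comp_cat hψ [j])
    (hF.comp hcat)

lemma IsTransferFixed.setLIntegral_cylinder_cons [IsFiniteMeasure ν] (hψ : Continuous ψ)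
    (hν : IsTransferFixed ψ ν) (j : Fin N) (w : Word N) {F : SeqSp N → ℝ≥0∞}
    (hF : Measurable F) :
    ∫⁻ x in cylinder (j :: w), F x ∂ν =
      ∫⁻ x in cylinder w, ENNReal.ofReal (Real.exp (ψ (cat [j] x))) * F (cat [j] x) ∂ν := by
  rw [← lintegral_indicator (measurableSet_cylinder _),
    ← lintegral_indicator (measurableSet_cylinder _),
    hν.lintegral_eq_sum hψ (hF.indicator (measurableSet_cylinder _)), Finset.sum_eq_single j]
  · refine lintegral_congr fun x => ?_
    by_cases hx : x ∈ cylinder w <;>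
      simp [indicator, cat_singleton_mem_cylinder_cons, hx]
  · intro i _ hij
    simp [indicator, cat_singleton_mem_cylinder_cons, hij]
  · simp

lemma IsTransferFixed.setLIntegral_cylinder [IsFiniteMeasure ν] (hψ : Continuous ψ)
    (hν : IsTransferFixed ψ ν) (w : Word N) {F : SeqSp N → ℝ≥0∞} (hF : Measurable F) :
    ∫⁻ x in cylinder w, F x ∂ν =
      ∫⁻ x, ENNReal.ofReal (Real.exp (birkhoff ψ w.length (cat w x))) * F (cat w x) ∂ν := by
  induction w generalizing F with
  | nil => simp [eq_univ_of_forall mem_cylinder_nil, birkhoff, cat_nil]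
  | cons j w ih =>
    have integrand_measurable :
        Measurable fun x => ENNReal.ofReal (Real.exp (ψ (cat [j] x))) * F (cat [j] x) :=
      (measurable_ofReal_exp_comp_cat hψ [j]).mul (hF.comp (continuous_cat [j]).measurable)
    rw [hν.setLIntegral_cylinder_cons hψ j w hF, ih integrand_measurable]
    refine lintegral_congr fun x => ?_
    rw [← cat_cons, ← mul_assoc, ← ENNReal.ofReal_mul (Real.exp_pos _).le, ← Real.exp_add,
      List.length_cons, birkhoff_succ, shift_cat_cons, add_comm]

lemma IsTransferFixed.measure_cylinder_inter [IsFiniteMeasure ν] (hψ : Continuous ψ)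
    (hν : IsTransferFixed ψ ν) (w : Word N) {B : Set (SeqSp N)} (hB : MeasurableSet B) :
    ν (cylinder w ∩ B) =
      ∫⁻ x in cat w ⁻¹' B, ENNReal.ofReal (Real.exp (birkhoff ψ w.length (cat w x))) ∂ν := by
  have hcatB : MeasurableSet (cat w ⁻¹' B) := (continuous_cat w).measurable hB
  calc ν (cylinder w ∩ B) = ∫⁻ x in cylinder w, B.indicator 1 x ∂ν := by
        rw [lintegral_indicator_one hB, Measure.restrict_apply hB, inter_comm]
    _ = ∫⁻ x, ENNReal.ofReal (Real.exp (birkhoff ψ w.length (cat w x))) *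
          B.indicator 1 (cat w x) ∂ν :=
        hν.setLIntegral_cylinder hψ w (measurable_one.indicator hB)
    _ = _ := by
        rw [← lintegral_indicator hcatB]
        refine lintegral_congr fun x => ?_
        by_cases hx : cat w x ∈ B <;> simp [hx]

lemma IsTransferFixed.measure_cylinder_le [IsProbabilityMeasure ν] (hψ : Continuous ψ)
    (hν : IsTransferFixed ψ ν) (w : Word N) (x : SeqSp N) :
    ν (cylinder w) ≤
      ENNReal.ofReal (Real.exp (birkhoff ψ w.length (cat w x) + varnSum ψ w.length)) := by
  calc ν (cylinder w)
      = ∫⁻ y, ENNReal.ofReal (Real.exp (birkhoff ψ w.length (cat w y))) ∂ν := by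
        simpa using hν.measure_cylinder_inter hψ w MeasurableSet.univ
    _ ≤ ∫⁻ _, ENNReal.ofReal
          (Real.exp (birkhoff ψ w.length (cat w x) + varnSum ψ w.length)) ∂ν := by
        gcongr with y
        exact birkhoff_cat_le_add_varnSum hψ w y x
    _ = _ := by simp

lemma IsTransferFixed.exp_mul_measure_cylinder_mul_le [IsProbabilityMeasure ν]
    (hψ : Continuous ψ) (hν : IsTransferFixed ψ ν) (w : Word N) {B : Set (SeqSp N)}
    (hB : MeasurableSet B) :
    ENNReal.ofReal (Real.exp (-varnSum ψ w.length)) * ν (cylinder w) * ν (cat w ⁻¹' B) ≤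
      ν (cylinder w ∩ B) := by
  rw [hν.measure_cylinder_inter hψ w hB, ← setLIntegral_const]
  refine lintegral_mono fun x => ?_
  calc ENNReal.ofReal (Real.exp (-varnSum ψ w.length)) * ν (cylinder w)
      ≤ ENNReal.ofReal (Real.exp (-varnSum ψ w.length)) *
          ENNReal.ofReal (Real.exp (birkhoff ψ w.length (cat w x) + varnSum ψ w.length)) := by
        gcongr
        exact hν.measure_cylinder_le hψ w x
    _ = ENNReal.ofReal (Real.exp (birkhoff ψ w.length (cat w x))) := by
        rw [← ENNReal.ofReal_mul (Real.exp_pos _).le, ← Real.exp_add, neg_add_cancel_comm_assoc]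

end GibbsMeasure

end Symb

namespace Lq

section Dyadic

variable {m n : ℕ} {k l : ℤ}

lemma mem_dyadic_iff_ceil_eq {x : ℝ} : x ∈ dyadic n k ↔ ⌈x * 2 ^ n⌉ = k := by
  rw [dyadic, mem_Ioc, Int.ceil_eq_iff, div_lt_iff₀ (by positivity), le_div_iff₀ (by positivity)]

lemma measurableSet_dyadic (n : ℕ) (k : ℤ) : MeasurableSet (dyadic n k) := measurableSet_Ioc

lemma closure_dyadic (n : ℕ) (k : ℤ) :
    closure (dyadic n k) = Icc (((k : ℝ) - 1) / 2 ^ n) ((k : ℝ) / 2 ^ n) :=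
  closure_Ioc (div_lt_div_of_pos_right (sub_one_lt _) (by positivity)).ne

/-- The relation `B ∼ B'` between dyadic intervals of level `n`, on indices: the closures meet. -/
def Adjacent (n : ℕ) (k l : ℤ) : Prop :=
  (closure (dyadic n k) ∩ closure (dyadic n l)).Nonempty

lemma adjacent_iff : Adjacent n k l ↔ k - 1 ≤ l ∧ l - 1 ≤ k := by
  simp only [Adjacent, closure_dyadic, Icc_inter_Icc, nonempty_Icc, sup_le_iff, le_inf_iff]
  field_simp
  norm_cast
  omega

lemma adjacent_of_abs_sub_le {x y : ℝ} (hx : x ∈ dyadic n k) (hy : y ∈ dyadic n l)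
    (hxy : |x - y| ≤ 1 / 2 ^ n) : Adjacent n k l := by
  rw [adjacent_iff, ← mem_dyadic_iff_ceil_eq.1 hx, ← mem_dyadic_iff_ceil_eq.1 hy,
    sub_le_iff_le_add, sub_le_iff_le_add, ← Int.ceil_add_one, ← Int.ceil_add_one]
  rw [abs_sub_le_iff, le_div_iff₀ (by positivity), le_div_iff₀ (by positivity), sub_mul, sub_mul]
    at hxy
  exact ⟨Int.ceil_mono (by linarith), Int.ceil_mono (by linarith)⟩

/-- The index of the dyadic interval of level `n` containing the `k`-th one of level `m + n`. -/
def dyadicParent (m : ℕ) (k : ℤ) : ℤ := ⌈(k : ℝ) / 2 ^ m⌉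

lemma dyadic_subset_dyadic_dyadicParent (m n : ℕ) (k : ℤ) :
    dyadic (m + n) k ⊆ dyadic n (dyadicParent m k) := by
  intro x hx
  rw [mem_dyadic_iff_ceil_eq, dyadicParent, ← mem_dyadic_iff_ceil_eq.1 hx]
  refine eq_of_forall_ge_iff fun j => ?_
  rw [Int.ceil_le, Int.ceil_le, div_le_iff₀ (by positivity), pow_add]
  norm_cast
  rw [Int.ceil_le]
  push_cast
  rw [mul_comm (2 ^ m), ← mul_assoc, mul_le_mul_iff_left₀ (by positivity)]

lemma finite_setOf_measure_dyadic_ne_zero {ρ : Measure ℝ} {a b : ℝ} (hρ : ρ (Icc a b)ᶜ = 0)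
    (n : ℕ) : {k | ρ (dyadic n k) ≠ 0}.Finite := by
  refine (finite_Icc ⌈a * 2 ^ n⌉ ⌈b * 2 ^ n⌉).subset fun k hk => ?_
  obtain ⟨x, hxk, hx⟩ : (dyadic n k ∩ Icc a b).Nonempty := by
    by_contra hempty
    rw [not_nonempty_iff_eq_empty, ← disjoint_iff_inter_eq_empty] at hempty
    exact hk (measure_mono_null hempty.subset_compl_right hρ)
  rw [← mem_dyadic_iff_ceil_eq.1 hxk]
  exact ⟨Int.ceil_mono (by gcongr; exact hx.1), Int.ceil_mono (by gcongr; exact hx.2)⟩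

end Dyadic

section NeighborSum

variable {ρ : Measure ℝ} {m n : ℕ} {q : ℝ}

/-- `Σ_{Q ∈ D_n, Q ⊆ B} ρ(Q)^q`. -/
def lqSumWithin (ρ : Measure ℝ) (B : Set ℝ) (n : ℕ) (q : ℝ) : ℝ :=
  ∑' k : ℤ, if ρ (dyadic n k) ≠ 0 ∧ dyadic n k ⊆ B then ρ.real (dyadic n k) ^ q else 0

/-- `Σ_{B ∈ D_n, B ∼ Q̃} Σ_{Q ∈ D_{m+n}, Q ⊆ B} ρ(Q)^q`, for the interval `Q̃ ∈ D_n` of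
index `kt`. -/
def neighborLqSum (ρ : Measure ℝ) (n m : ℕ) (kt : ℤ) (q : ℝ) : ℝ :=
  ∑' k : ℤ, if ρ (dyadic n k) ≠ 0 ∧ Adjacent n k kt then
    lqSumWithin ρ (dyadic n k) (m + n) q else 0

lemma lqSumWithin_nonneg (ρ : Measure ℝ) (B : Set ℝ) (n : ℕ) (q : ℝ) :
    0 ≤ lqSumWithin ρ B n q :=
  tsum_nonneg fun k => by split_ifs <;> positivity

lemma neighborLqSum_nonneg (ρ : Measure ℝ) (n m : ℕ) (kt : ℤ) (q : ℝ) :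
    0 ≤ neighborLqSum ρ n m kt q :=
  tsum_nonneg fun k => by
    split_ifs
    exacts [lqSumWithin_nonneg _ _ _ _, le_rfl]

lemma sum_le_lqSumWithin (hfin : {k | ρ (dyadic n k) ≠ 0}.Finite) {B : Set ℝ} {S : Finset ℤ}
    (hS : ∀ k ∈ S, ρ (dyadic n k) ≠ 0 ∧ dyadic n k ⊆ B) :
    ∑ k ∈ S, ρ.real (dyadic n k) ^ q ≤ lqSumWithin ρ B n q := by
  rw [Finset.sum_congr rfl fun k hk => (if_pos (hS k hk)).symm]
  refine Summable.sum_le_tsum S (fun k _ => by split_ifs <;> positivity) ?_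
  exact summable_of_ne_finset_zero (s := hfin.toFinset) fun k hk =>
    if_neg fun h => hk (hfin.mem_toFinset.2 h.1)

lemma sum_le_neighborLqSum (hfin : ∀ n, {k | ρ (dyadic n k) ≠ 0}.Finite) {kt : ℤ} {S : Finset ℤ}
    (hS : ∀ k ∈ S, ρ (dyadic (m + n) k) ≠ 0 ∧ Adjacent n (dyadicParent m k) kt) :
    ∑ k ∈ S, ρ.real (dyadic (m + n) k) ^ q ≤ neighborLqSum ρ n m kt q := by
  have parent_ne_zero {k : ℤ} (hk : k ∈ S) : ρ (dyadic n (dyadicParent m k)) ≠ 0 := fun h =>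
    (hS k hk).1 (measure_mono_null (dyadic_subset_dyadic_dyadicParent m n k) h)
  calc ∑ k ∈ S, ρ.real (dyadic (m + n) k) ^ q
      = ∑ j ∈ S.image (dyadicParent m), ∑ k ∈ S with dyadicParent m k = j,
          ρ.real (dyadic (m + n) k) ^ q :=
        (Finset.sum_fiberwise_of_maps_to (fun k => Finset.mem_image_of_mem _) _).symm
    _ ≤ ∑ j ∈ S.image (dyadicParent m), if ρ (dyadic n j) ≠ 0 ∧ Adjacent n j kt then
          lqSumWithin ρ (dyadic n j) (m + n) q else 0 := by
        refine Finset.sum_le_sum fun j hj => ?_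
        obtain ⟨k, hk, rfl⟩ := Finset.mem_image.1 hj
        rw [if_pos ⟨parent_ne_zero hk, (hS k hk).2⟩]
        refine sum_le_lqSumWithin (hfin _) fun i hi => ?_
        obtain ⟨hiS, hik⟩ := Finset.mem_filter.1 hi
        exact ⟨(hS i hiS).1, hik ▸ dyadic_subset_dyadic_dyadicParent m n i⟩
    _ ≤ neighborLqSum ρ n m kt q := by
        refine Summable.sum_le_tsum _ (fun j _ => ?_) ?_
        · split_ifs
          exacts [lqSumWithin_nonneg _ _ _ _, le_rfl]
        · exact summable_of_ne_finset_zero (s := (hfin n).toFinset) fun j hj =>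
            if_neg fun h => hj ((hfin n).mem_toFinset.2 h.1)

end NeighborSum

section Jensen

variable {ι κ : Type*} {U : Finset ι} {S : Finset κ} {a : ι → κ → ℝ} {I q : ℝ}

lemma le_sum_rpow_sum_mul (hq₀ : 0 ≤ q) (hq₁ : q ≤ 1) {w : ι → ℝ} (hw : ∀ u ∈ U, 0 ≤ w u)
    (hw_sum : ∑ u ∈ U, w u = 1) (ha : ∀ u ∈ U, ∀ k ∈ S, 0 ≤ a u k)
    (hI : ∀ u ∈ U, I ≤ ∑ k ∈ S, a u k ^ q) :
    I ≤ ∑ k ∈ S, (∑ u ∈ U, w u * a u k) ^ q := by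
  calc I = ∑ u ∈ U, w u * I := by rw [← Finset.sum_mul, hw_sum, one_mul]
    _ ≤ ∑ u ∈ U, w u * ∑ k ∈ S, a u k ^ q := by
        gcongr with u hu
        exacts [hw u hu, hI u hu]
    _ = ∑ k ∈ S, ∑ u ∈ U, w u * a u k ^ q := by
        simp only [Finset.mul_sum]
        exact Finset.sum_comm
    _ ≤ ∑ k ∈ S, (∑ u ∈ U, w u * a u k) ^ q := by
        gcongr with k hk
        exact (Real.concaveOn_rpow hq₀ hq₁).le_map_sum hw hw_sum fun u hu => ha u hu k hk

lemma rpow_mul_sum_mul_le_sum_rpow (hq₀ : 0 ≤ q) (hq₁ : q ≤ 1) {c : ℝ} (hc : 0 ≤ c) {p : ι → ℝ}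
    (hp : ∀ u ∈ U, 0 ≤ p u) (hp_sum : 0 < ∑ u ∈ U, p u) (ha : ∀ u ∈ U, ∀ k ∈ S, 0 ≤ a u k)
    {b : κ → ℝ} (hb : ∀ k ∈ S, c * ∑ u ∈ U, p u * a u k ≤ b k)
    (hI : ∀ u ∈ U, I ≤ ∑ k ∈ S, a u k ^ q) :
    (c * ∑ u ∈ U, p u) ^ q * I ≤ ∑ k ∈ S, b k ^ q := by
  set P := ∑ u ∈ U, p u
  have average_nonneg : ∀ k ∈ S, 0 ≤ ∑ u ∈ U, p u / P * a u k := fun k hk =>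
    Finset.sum_nonneg fun u hu => mul_nonneg (div_nonneg (hp u hu) hp_sum.le) (ha u hu k hk)
  have average_le : ∀ k ∈ S, c * P * ∑ u ∈ U, p u / P * a u k ≤ b k := fun k hk => by
    convert hb k hk using 1
    simp only [Finset.mul_sum]
    exact Finset.sum_congr rfl fun u _ => by field_simp
  calc (c * P) ^ q * I
      ≤ (c * P) ^ q * ∑ k ∈ S, (∑ u ∈ U, p u / P * a u k) ^ q := by
        gcongr
        refine le_sum_rpow_sum_mul hq₀ hq₁ (fun u hu => div_nonneg (hp u hu) hp_sum.le) ?_ ha hI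
        rw [← Finset.sum_div, div_self hp_sum.ne']
    _ = ∑ k ∈ S, (c * P * ∑ u ∈ U, p u / P * a u k) ^ q := by
        rw [Finset.mul_sum]
        exact Finset.sum_congr rfl fun k hk =>
          (Real.mul_rpow (by positivity) (average_nonneg k hk)).symm
    _ ≤ ∑ k ∈ S, b k ^ q := by
        gcongr with k hk
        · exact mul_nonneg (by positivity) (average_nonneg k hk)
        · exact average_le k hk

end Jensen

end Lq

namespace Symb

section HeavyBox

open Lq

variable {N : ℕ} {Φ : C1IFS N} {π : SeqSp N → ℝ} {ψ : SeqSp N → ℝ} {ν : Measure (SeqSp N)}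

lemma IsCoding.map_compl_Icc (hπ : IsCoding Φ π) (ν : Measure (SeqSp N)) :
    ν.map π (Icc 0 1)ᶜ = 0 := by
  rw [Measure.map_apply hπ.continuous.measurable measurableSet_Icc.compl, preimage_compl,
    eq_univ_of_forall (s := π ⁻¹' Icc 0 1) hπ.mem_Icc, compl_univ, measure_empty]

-- `T_u` is arbitrary outside `[0,1]`, so `T_u⁻¹(D)` is only null-measurable for `ν ∘ π⁻¹`.
lemma IsCoding.map_preimage_wordMap (hπ : IsCoding Φ π) (ν : Measure (SeqSp N)) (u : Word N)
    {D : Set ℝ} (hD : MeasurableSet D) :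
    ν.map π (wordMap Φ u ⁻¹' D) = ν (cat u ⁻¹' (π ⁻¹' D)) := by
  have wordMap_aemeasurable : AEMeasurable (wordMap Φ u) (ν.map π) := by
    rw [← Measure.restrict_eq_self_of_ae_mem (mem_ae_iff.2 (hπ.map_compl_Icc ν))]
    exact (continuousOn_wordMap u).aemeasurable measurableSet_Icc
  rw [Measure.map_apply₀ hπ.continuous.aemeasurable (wordMap_aemeasurable.nullMeasurable hD)]
  simp only [preimage_preimage, hπ.apply_cat]

lemma IsCoding.Ku_inter_nonempty_of_map_preimage_ne_zero (hπ : IsCoding Φ π) {u : Word N}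
    {D : Set ℝ} (hD : MeasurableSet D) (h : ν.map π (wordMap Φ u ⁻¹' D) ≠ 0) :
    (Ku Φ π u ∩ D).Nonempty := by
  rw [hπ.map_preimage_wordMap ν u hD] at h
  obtain ⟨x, hx⟩ := nonempty_of_measure_ne_zero h
  exact ⟨π (cat u x), hπ.Ku_eq_range u ▸ mem_range_self x, hx⟩

lemma IsTransferFixed.exp_mul_sum_le_map_real [IsProbabilityMeasure ν] (hψ : Continuous ψ)
    (hν : IsTransferFixed ψ ν) (hπ : IsCoding Φ π) {U : Finset (Word N)}
    (hU : (U : Set (Word N)).PairwiseDisjoint cylinder) {M : ℕ} (hM : ∀ u ∈ U, u.length ≤ M)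
    {D : Set ℝ} (hD : MeasurableSet D) :
    Real.exp (-varnSum ψ M) *
        ∑ u ∈ U, ν.real (cylinder u) * (ν.map π).real (wordMap Φ u ⁻¹' D) ≤
      (ν.map π).real D := by
  have hπD : MeasurableSet (π ⁻¹' D) := hπ.continuous.measurable hD
  have word_le : ∀ u ∈ U, Real.exp (-varnSum ψ M) *
      (ν.real (cylinder u) * (ν.map π).real (wordMap Φ u ⁻¹' D)) ≤
        ν.real (cylinder u ∩ π ⁻¹' D) := fun u hu => by
    have exp_le : Real.exp (-varnSum ψ M) ≤ Real.exp (-varnSum ψ u.length) :=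
      Real.exp_le_exp.2 (neg_le_neg (monotone_varnSum ψ (hM u hu)))
    have gibbs := ENNReal.toReal_mono (measure_ne_top _ _)
      (hν.exp_mul_measure_cylinder_mul_le hψ u hπD)
    rw [ENNReal.toReal_mul, ENNReal.toReal_mul, ENNReal.toReal_ofReal (Real.exp_pos _).le,
      ← hπ.map_preimage_wordMap ν u hD, mul_assoc] at gibbs
    exact (mul_le_mul_of_nonneg_right exp_le (by positivity)).trans gibbs
  calc Real.exp (-varnSum ψ M) *
        ∑ u ∈ U, ν.real (cylinder u) * (ν.map π).real (wordMap Φ u ⁻¹' D)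
      ≤ ∑ u ∈ U, ν.real (cylinder u ∩ π ⁻¹' D) := by
        rw [Finset.mul_sum]
        exact Finset.sum_le_sum word_le
    _ = ν.real (⋃ u ∈ U, cylinder u ∩ π ⁻¹' D) :=
        (measureReal_biUnion_finset (hU.mono fun u => inter_subset_left)
          fun u _ => (measurableSet_cylinder u).inter hπD).symm
    _ ≤ ν.real (π ⁻¹' D) := measureReal_mono (iUnion₂_subset fun u _ => inter_subset_right)
    _ = (ν.map π).real D := (map_measureReal_apply hπ.continuous.measurable hD).symm

lemma IsCoding.map_real_le_sum_cylinder [IsFiniteMeasure ν] (hπ : IsCoding Φ π) {n : ℕ}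
    (hW : (Wn Φ π n).Nonempty) {E : Set ℝ} (hE : MeasurableSet E) {U : Finset (Word N)}
    (hU : ∀ u ∈ Wn Φ π n, (Ku Φ π u ∩ E).Nonempty → u ∈ U) :
    (ν.map π).real E ≤ ∑ u ∈ U, ν.real (cylinder u) := by
  rw [map_measureReal_apply hπ.continuous.measurable hE]
  refine (measureReal_mono (fun x hx => ?_) (measure_ne_top _ _)).trans
    (measureReal_biUnion_finset_le U cylinder)
  obtain ⟨u, hu, hxu⟩ := hπ.exists_mem_Wn_mem_cylinder hW x
  obtain ⟨y, rfl⟩ := exists_cat_eq_of_mem_cylinder hxu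
  exact mem_biUnion (hU u hu ⟨_, hπ.Ku_eq_range u ▸ mem_range_self y, hx⟩) hxu

lemma IsCoding.adjacent_dyadicParent (hπ : IsCoding Φ π) {n m : ℕ} {u : Word N}
    (hu : u ∈ Wn Φ π n) {k kt : ℤ} (hk : (Ku Φ π u ∩ dyadic (m + n) k).Nonempty)
    (hkt : (Ku Φ π u ∩ dyadic n kt).Nonempty) : Adjacent n (dyadicParent m k) kt := by
  obtain ⟨x, hxu, hxk⟩ := hk
  obtain ⟨y, hyu, hykt⟩ := hkt
  exact adjacent_of_abs_sub_le (dyadic_subset_dyadic_dyadicParent m n k hxk) hykt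
    ((Metric.dist_le_diam_of_mem (hπ.isBounded_Ku u) hxu hyu).trans hu.2.1)

lemma pullbackLqSum_nonneg (Φ : C1IFS N) (ρ : Measure ℝ) (u : Word N) (m : ℕ) (q : ℝ) :
    0 ≤ pullbackLqSum Φ ρ u m q :=
  tsum_nonneg fun k => by split_ifs <;> positivity

lemma IsCoding.pullbackLqSum_eq_sum (hπ : IsCoding Φ π) {q : ℝ} (hq : q ≠ 0) {n m : ℕ}
    {kt : ℤ} {u : Word N} (hu : u ∈ Wn Φ π n) (hut : (Ku Φ π u ∩ dyadic n kt).Nonempty)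
    {S : Finset ℤ}
    (hS : ∀ k, k ∈ S ↔ ν.map π (dyadic (m + n) k) ≠ 0 ∧ Adjacent n (dyadicParent m k) kt) :
    pullbackLqSum Φ (ν.map π) u (m + n) q =
      ∑ k ∈ S, (ν.map π).real (wordMap Φ u ⁻¹' dyadic (m + n) k) ^ q := by
  rw [pullbackLqSum, tsum_eq_sum (s := S)]
  · exact Finset.sum_congr rfl fun k hk => if_neg ((hS k).1 hk).1
  · refine fun k hk => ite_eq_left_iff.2 fun hk_pos => ?_
    have preimage_null : ν.map π (wordMap Φ u ⁻¹' dyadic (m + n) k) = 0 := by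
      by_contra h
      have huk := hπ.Ku_inter_nonempty_of_map_preimage_ne_zero (measurableSet_dyadic _ _) h
      exact hk ((hS k).2 ⟨hk_pos, hπ.adjacent_dyadicParent hu huk hut⟩)
    rw [preimage_null, ENNReal.toReal_zero, Real.zero_rpow hq]

lemma IsTransferFixed.rpow_mul_le_neighborLqSum [IsProbabilityMeasure ν]
    (hψ : Continuous ψ) (hν : IsTransferFixed ψ ν) (hπ : IsCoding Φ π) {q : ℝ} (hq₀ : 0 < q)
    (hq₁ : q ≤ 1) {n M : ℕ} (hW : (Wn Φ π n).Nonempty) (hM : ∀ u ∈ Wn Φ π n, u.length ≤ M)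
    {m : ℕ} {kt : ℤ} (hkt : ν.map π (dyadic n kt) ≠ 0) {I : ℝ} (hI₀ : 0 ≤ I)
    (hI : ∀ u ∈ Wn Φ π n, I ≤ pullbackLqSum Φ (ν.map π) u (m + n) q) :
    (Real.exp (-varnSum ψ M) * (ν.map π).real (dyadic n kt)) ^ q * I ≤
      neighborLqSum (ν.map π) n m kt q := by
  have : IsProbabilityMeasure (ν.map π) :=
    Measure.isProbabilityMeasure_map hπ.continuous.aemeasurable
  have hfin (l : ℕ) := finite_setOf_measure_dyadic_ne_zero (hπ.map_compl_Icc ν) l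
  let U := {u ∈ (hπ.finite_Wn n).toFinset | (Ku Φ π u ∩ dyadic n kt).Nonempty}
  have mem_U {u : Word N} : u ∈ U ↔ u ∈ Wn Φ π n ∧ (Ku Φ π u ∩ dyadic n kt).Nonempty := by
    simp [U]
  let S := {k ∈ (hfin (m + n)).toFinset | Adjacent n (dyadicParent m k) kt}
  have mem_S (k : ℤ) : k ∈ S ↔
      ν.map π (dyadic (m + n) k) ≠ 0 ∧ Adjacent n (dyadicParent m k) kt := by simp [S]
  have I_le : ∀ u ∈ U, I ≤ ∑ k ∈ S, (ν.map π).real (wordMap Φ u ⁻¹' dyadic (m + n) k) ^ q :=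
    fun u hu => (hI u (mem_U.1 hu).1).trans_eq
      (hπ.pullbackLqSum_eq_sum hq₀.ne' (mem_U.1 hu).1 (mem_U.1 hu).2 mem_S)
  have box_le_sum : (ν.map π).real (dyadic n kt) ≤ ∑ u ∈ U, ν.real (cylinder u) :=
    hπ.map_real_le_sum_cylinder hW (measurableSet_dyadic n kt) fun u hu hut => mem_U.2 ⟨hu, hut⟩
  have box_pos : 0 < (ν.map π).real (dyadic n kt) := ENNReal.toReal_pos hkt (measure_ne_top _ _)
  have subbox_ge (k : ℤ) : Real.exp (-varnSum ψ M) * ∑ u ∈ U, ν.real (cylinder u) *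
      (ν.map π).real (wordMap Φ u ⁻¹' dyadic (m + n) k) ≤ (ν.map π).real (dyadic (m + n) k) :=
    hν.exp_mul_sum_le_map_real hψ hπ
      ((hπ.pairwiseDisjoint_cylinder_Wn n).subset fun u hu => (mem_U.1 hu).1)
      (fun u hu => hM u (mem_U.1 hu).1) (measurableSet_dyadic _ k)
  calc (Real.exp (-varnSum ψ M) * (ν.map π).real (dyadic n kt)) ^ q * I
      ≤ (Real.exp (-varnSum ψ M) * ∑ u ∈ U, ν.real (cylinder u)) ^ q * I := by gcongr
    _ ≤ ∑ k ∈ S, (ν.map π).real (dyadic (m + n) k) ^ q :=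
        rpow_mul_sum_mul_le_sum_rpow hq₀.le hq₁ (Real.exp_pos _).le
          (fun _ _ => measureReal_nonneg) (box_pos.trans_le box_le_sum)
          (fun _ _ _ _ => measureReal_nonneg) (fun k _ => subbox_ge k) I_le
    _ ≤ neighborLqSum (ν.map π) n m kt q := sum_le_neighborLqSum hfin fun k hk => (mem_S k).1 hk

lemma IsTransferFixed.rpow_mul_sInf_le_neighborLqSum [IsProbabilityMeasure ν]
    (hψ : Continuous ψ) (hν : IsTransferFixed ψ ν) (hπ : IsCoding Φ π) {q : ℝ} (hq₀ : 0 < q)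
    (hq₁ : q ≤ 1) {n M : ℕ} (hM : ∀ u ∈ Wn Φ π n, u.length ≤ M) (m : ℕ) {kt : ℤ}
    (hkt : ν.map π (dyadic n kt) ≠ 0) :
    (Real.exp (-varnSum ψ M) * (ν.map π).real (dyadic n kt)) ^ q *
        sInf ((fun u => pullbackLqSum Φ (ν.map π) u (m + n) q) '' Wn Φ π n) ≤
      neighborLqSum (ν.map π) n m kt q := by
  have pullback_nonneg : 0 ∈ lowerBounds
      ((fun u => pullbackLqSum Φ (ν.map π) u (m + n) q) '' Wn Φ π n) :=
    forall_mem_image.2 fun u _ => pullbackLqSum_nonneg Φ _ u _ q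
  obtain hW | hW := (Wn Φ π n).eq_empty_or_nonempty
  · -- This happens exactly when `diam K ≤ 2⁻ⁿ`; the minimum over `W_n` is then `sInf ∅ = 0`.
    simpa [hW] using neighborLqSum_nonneg (ν.map π) n m kt q
  · exact hν.rpow_mul_le_neighborLqSum hψ hπ hq₀ hq₁ hW hM hkt
      (Real.sInf_nonneg pullback_nonneg)
      fun u hu => csInf_le ⟨0, pullback_nonneg⟩ (mem_image_of_mem _ hu)

end HeavyBox

end Symb

theorem heavy_box_estimate_general
    {N : ℕ} (Φ : C1IFS N) (_ : Φ.NontrivialIFS)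
    (π : SeqSp N → ℝ) (hπ : IsCoding Φ π)
    (ψ : SeqSp N → ℝ) (hψc : Continuous ψ)
    (ν : Measure (SeqSp N)) [IsProbabilityMeasure ν] (hν : IsTransferFixed ψ ν)
    (ρ : Measure ℝ) (hρ : ρ = Measure.map π ν)
    (q : ℝ) (hq : q ∈ Set.Ioc (0 : ℝ) 1) :
    ∃ s : ℕ → ℝ, (∀ n, 0 < s n) ∧
      Tendsto (fun n => Real.log (s n) / n) atTop (𝓝 0) ∧
      ∀ n m : ℕ, ∀ kt : ℤ, ρ (Lq.dyadic n kt) ≠ 0 →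
        s n * ρ.real (Lq.dyadic n kt) ^ q *
            sInf ((fun u => pullbackLqSum Φ ρ u (m + n) q) '' Wn Φ π n) ≤
          Lq.neighborLqSum ρ n m kt q := by
  subst hρ
  obtain ⟨L, hL_pos, hL⟩ := hπ.exists_length_le_mul_of_mem_Wn
  refine ⟨fun n => Real.exp (-varnSum ψ (L * n)) ^ q, fun n => by positivity, ?_, ?_⟩
  · have hlim := (tendsto_varnSum_mul_div hψc hL_pos).const_mul (-q)
    rw [mul_zero] at hlim
    refine hlim.congr fun n => ?_
    rw [Real.log_rpow (Real.exp_pos _), Real.log_exp]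
    ring
  · intro n m kt hkt
    rw [← Real.mul_rpow (Real.exp_pos _).le measureReal_nonneg]
    exact hν.rpow_mul_sInf_le_neighborLqSum hψc hπ hq.1 hq.2 (hL n) m hkt

/-- **Lemma 5.9.**  For a weak Gibbs measure `ρ` and every `0 < q < 1` there is a
sequence `(s_n)` of positive reals with `log s_n = o(n)` such that for all `n, m` and
every `Q̃ ∈ D_n`,
`Σ_{B∈D_n, B∼Q̃} Σ_{Q∈D_{m+n}, Q⊆B} ρ(Q)^q ≥ s_n ρ(Q̃)^q min_{u∈W_n} Σ_{Q∈D_{m+n}} ρ(T_u⁻¹Q)^q`,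
where `B ∼ Q̃` means the closures of `B` and `Q̃` intersect. -/
theorem heavy_box_estimate
    {N : ℕ} (Φ : C1IFS N) (hΦ : Φ.NontrivialIFS)
    (π : SeqSp N → ℝ) (hπ : IsCoding Φ π) (hπc : Continuous π)
    (ψ : SeqSp N → ℝ) (hψc : Continuous ψ) (hψn : Normalized ψ)
    (ν : Measure (SeqSp N)) [IsProbabilityMeasure ν] (hν : IsTransferFixed ψ ν)
    (ρ : Measure ℝ) (hρ : ρ = Measure.map π ν)
    (q : ℝ) (hq : q ∈ Set.Ioo (0:ℝ) 1) :
    ∃ s : ℕ → ℝ, (∀ n, 0 < s n) ∧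
      Filter.Tendsto (fun n => Real.log (s n) / n) Filter.atTop (nhds 0) ∧
      ∀ n m : ℕ, ∀ kt : ℤ, ρ (Lq.dyadic n kt) ≠ 0 →
        (∑' kB : ℤ,
          if ρ (Lq.dyadic n kB) ≠ 0 ∧
              (closure (Lq.dyadic n kB) ∩ closure (Lq.dyadic n kt)).Nonempty then
            ∑' kQ : ℤ,
              if ρ (Lq.dyadic (m + n) kQ) ≠ 0 ∧ Lq.dyadic (m + n) kQ ⊆ Lq.dyadic n kB then
                (ρ (Lq.dyadic (m + n) kQ)).toReal ^ q
              else 0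
          else 0) ≥
        s n * (ρ (Lq.dyadic n kt)).toReal ^ q *
          sInf ((fun u => pullbackLqSum Φ ρ u (m + n) q) '' Wn Φ π n) :=
  heavy_box_estimate_general Φ hΦ π hπ ψ hψc ν hν ρ hρ q (Set.Ioo_subset_Ioc_self hq)
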